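/- (Monotonicity of the reward program transformation.) Let S be a pGCL program and let f, g : ℝ≥0∞ → ℝ≥0∞ be monotone functions with f(x) ≤ g(x) for all x. Then for every expectation X, wp[T_f(S)](X) ≤ wp[T_g(S)](X) pointwise. -/

import Mathlib

open ENNReal

/-- Program states: maps from variables to extended non-negative reals. -/
abbrev PState (V : Type) := V → ℝ≥0∞

/-- Expectations: maps from states to extended non-negative reals. -/
abbrev Expct (V : Type) := PState V → ℝ≥0∞

/-- Syntax of pGCL programs. -/
inductive pGCL (V : Type) : Type 1
  | skip : pGCL V
  | assign : V → Expct V → pGCL V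
  | reward : Expct V → pGCL V
  | seq : pGCL V → pGCL V → pGCL V
  | prob : (p : ℝ≥0∞) → p ≤ 1 → pGCL V → pGCL V → pGCL V
  | ifte : (PState V → Bool) → pGCL V → pGCL V → pGCL V
  | loop : (PState V → Bool) → pGCL V → pGCL V

variable {V : Type} [DecidableEq V]

/-- The weakest pre-expectation transformer, bundled as an order hom. -/
noncomputable def wpHom : pGCL V → (Expct V →o Expct V)
  | .skip => OrderHom.id
  | .assign x e => ⟨fun X σ => X (Function.update σ x (e σ)), fun _ _ h σ => h _⟩
  | .reward e => ⟨fun X σ => e σ + X σ, fun _ _ h σ => add_le_add le_rfl (h σ)⟩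
  | .seq S₁ S₂ => (wpHom S₁).comp (wpHom S₂)
  | .prob p _ S₁ S₂ =>
      ⟨fun X σ => p * wpHom S₁ X σ + (1 - p) * wpHom S₂ X σ, by
        intro X Y h σ
        exact add_le_add (mul_le_mul' le_rfl ((wpHom S₁).monotone h σ))
          (mul_le_mul' le_rfl ((wpHom S₂).monotone h σ))⟩
  | .ifte b S₁ S₂ =>
      ⟨fun X σ => if b σ then wpHom S₁ X σ else wpHom S₂ X σ, by
        intro X Y h σ
        dsimp only
        split
        · exact (wpHom S₁).monotone h σ
        · exact (wpHom S₂).monotone h σ⟩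
  | .loop b S =>
      ⟨fun X => OrderHom.lfp
        ⟨fun Y σ => if b σ then wpHom S Y σ else X σ, by
          intro Y₁ Y₂ h σ
          dsimp only
          split
          · exact (wpHom S).monotone h σ
          · exact le_rfl⟩, by
        intro X₁ X₂ h
        apply OrderHom.lfp_le
        have := OrderHom.map_lfp
          (⟨fun Y σ => if b σ then wpHom S Y σ else X₂ σ, by
            intro Y₁ Y₂ h σ
            dsimp only
            split
            · exact (wpHom S).monotone h σ
            · exact le_rfl⟩ : Expct V →o Expct V)
        refine le_trans (fun σ => ?_) (le_of_eq this)
        show (if b σ then wpHom S _ σ else X₁ σ) ≤ (if b σ then wpHom S _ σ else X₂ σ)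
        split
        · exact le_rfl
        · exact h σ⟩

/-- The weakest pre-expectation `wp[S](X)`. -/
noncomputable def wp (S : pGCL V) (X : Expct V) : Expct V := wpHom S X

/-- An expression does not depend on variable `τ`. -/
def UnusedE (τ : V) (e : Expct V) : Prop := ∀ σ v, e (Function.update σ τ v) = e σ

/-- A Boolean guard does not depend on variable `τ`. -/
def UnusedB (τ : V) (b : PState V → Bool) : Prop := ∀ σ v, b (Function.update σ τ v) = b σ

/-- Variable `τ` does not occur in the program `S`. -/
def NotOccurs (τ : V) : pGCL V → Prop
  | .skip => True
  | .assign x e => x ≠ τ ∧ UnusedE τ e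
  | .reward e => UnusedE τ e
  | .seq S₁ S₂ => NotOccurs τ S₁ ∧ NotOccurs τ S₂
  | .prob _ _ S₁ S₂ => NotOccurs τ S₁ ∧ NotOccurs τ S₂
  | .ifte b S₁ S₂ => UnusedB τ b ∧ NotOccurs τ S₁ ∧ NotOccurs τ S₂
  | .loop b S => UnusedB τ b ∧ NotOccurs τ S

/-- Auxiliary reward transformation `T'_f` with ghost variable `τ`:
replaces `reward(e)` by `reward(f(τ+e) − f(τ)); τ := τ + e`. -/
noncomputable def Taux (τ : V) (f : ℝ≥0∞ → ℝ≥0∞) : pGCL V → pGCL V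
  | .reward e =>
      .seq (.reward fun σ => f (σ τ + e σ) - f (σ τ)) (.assign τ (fun σ => σ τ + e σ))
  | .seq S₁ S₂ => .seq (Taux τ f S₁) (Taux τ f S₂)
  | .prob p hp S₁ S₂ => .prob p hp (Taux τ f S₁) (Taux τ f S₂)
  | .ifte b S₁ S₂ => .ifte b (Taux τ f S₁) (Taux τ f S₂)
  | .loop b S => .loop b (Taux τ f S)
  | .skip => .skip
  | .assign x e => .assign x e

/-- Full reward transformation `T_f(S) = τ := 0; reward(f(0)); T'_f(S)`. -/
noncomputable def Tfull (τ : V) (f : ℝ≥0∞ → ℝ≥0∞) (S : pGCL V) : pGCL V :=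
  .seq (.assign τ (fun _ => 0)) (.seq (.reward fun _ => f 0) (Taux τ f S))

/-!
Read `f τ` as a potential: the reward `f (τ + e) - f τ` is what the potential gains when `τ` grows
by `e`. Hence `f τ + wp[T'_f(S)](X)`, unlike `wp[T'_f(S)](X)` alone, is monotone in `f`.
This is an induction on `S`; a loop is handled by induction along the least fixed point for `f`,
the fixed point for `g` being merely unfolded. The full transformation starts from `τ = 0`
and pays the initial potential `f 0`.
-/

section OrderedAlgebra

theorem add_convexCombo {R : Type*} [Semiring R] {p q : R} (hpq : p + q = 1) (c x y : R) :
    c + (p * x + q * y) = p * (c + x) + q * (c + y) := by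
  rw [mul_add, mul_add, add_add_add_comm, ← add_mul, hpq, one_mul]

theorem add_sSup_le {ι : Type*} {a c : ι → ℝ≥0∞} {s : Set (ι → ℝ≥0∞)} (hac : a ≤ c)
    (hs : ∀ x ∈ s, a + x ≤ c) : a + sSup s ≤ c := by
  rcases s.eq_empty_or_nonempty with rfl | hne
  · have hzero : sSup (∅ : Set (ι → ℝ≥0∞)) = 0 := sSup_empty
    rwa [hzero, add_zero]
  · intro i
    have : Nonempty s := hne.to_subtype
    rw [Pi.add_apply, sSup_apply, ENNReal.add_iSup]
    exact iSup_le fun x => hs x x.2 i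

theorem add_lfp_le_add_lfp {ι : Type*} {a b : ι → ℝ≥0∞} (hab : a ≤ b)
    {Φ Ψ : (ι → ℝ≥0∞) →o (ι → ℝ≥0∞)} (h : ∀ x y, a + x ≤ b + y → a + Φ x ≤ b + Ψ y) :
    a + Φ.lfp ≤ b + Ψ.lfp := by
  refine OrderHom.lfp_induction Φ (p := fun x => a + x ≤ b + Ψ.lfp) (fun x hx _ => ?_)
    fun s hs => add_sSup_le (le_add_right hab) hs
  simpa only [Ψ.map_lfp] using h x Ψ.lfp hx

end OrderedAlgebra

section WeakestPreexpectation

theorem wp_assign (x : V) (e X : Expct V) (σ : PState V) :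
    wp (.assign x e) X σ = X (Function.update σ x (e σ)) := rfl

theorem wp_reward (e X : Expct V) : wp (.reward e) X = e + X := rfl

theorem wp_seq (S₁ S₂ : pGCL V) (X : Expct V) : wp (.seq S₁ S₂) X = wp S₁ (wp S₂ X) := rfl

theorem wp_prob {p : ℝ≥0∞} (hp : p ≤ 1) (S₁ S₂ : pGCL V) (X : Expct V) (σ : PState V) :
    wp (.prob p hp S₁ S₂) X σ = p * wp S₁ X σ + (1 - p) * wp S₂ X σ := rfl

theorem wp_ifte (b : PState V → Bool) (S₁ S₂ : pGCL V) (X : Expct V) (σ : PState V) :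
    wp (.ifte b S₁ S₂) X σ = if b σ then wp S₁ X σ else wp S₂ X σ := rfl

/-- The characteristic functional `Y ↦ [b]·wp[S](Y) + [¬b]·X` of the loop `while(b){S}` with
postexpectation `X`. -/
noncomputable def loopHom (b : PState V → Bool) (S : pGCL V) (X : Expct V) :
    Expct V →o Expct V where
  toFun Y σ := if b σ then wp S Y σ else X σ
  monotone' _ _ hY σ := by
    dsimp only
    split
    · exact (wpHom S).monotone hY σ
    · exact le_rfl

theorem loopHom_apply (b : PState V → Bool) (S : pGCL V) (X Y : Expct V) (σ : PState V) :
    loopHom b S X Y σ = if b σ then wp S Y σ else X σ := rfl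

theorem wp_loop (b : PState V → Bool) (S : pGCL V) (X : Expct V) :
    wp (.loop b S) X = (loopHom b S X).lfp := rfl

end WeakestPreexpectation

section RewardTransformation

/-- The program `S` never assigns to `τ`, although it may read it. -/
def NotAssigned (τ : V) : pGCL V → Prop
  | .skip => True
  | .assign x _ => x ≠ τ
  | .reward _ => True
  | .seq S₁ S₂ => NotAssigned τ S₁ ∧ NotAssigned τ S₂
  | .prob _ _ S₁ S₂ => NotAssigned τ S₁ ∧ NotAssigned τ S₂
  | .ifte _ S₁ S₂ => NotAssigned τ S₁ ∧ NotAssigned τ S₂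
  | .loop _ S => NotAssigned τ S

theorem NotOccurs.notAssigned {τ : V} {S : pGCL V} (hτ : NotOccurs τ S) : NotAssigned τ S := by
  induction S with
  | skip | reward => trivial
  | assign => exact hτ.1
  | seq _ _ ih₁ ih₂ | prob _ _ _ _ ih₁ ih₂ => exact ⟨ih₁ hτ.1, ih₂ hτ.2⟩
  | ifte _ _ _ ih₁ ih₂ => exact ⟨ih₁ hτ.2.1, ih₂ hτ.2.2⟩
  | loop _ _ ih => exact ih hτ.2

/-- The expectation `f(τ)`: the reward, as measured by `f`, for the amount `τ` accumulated so
far. -/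
def potential (τ : V) (f : ℝ≥0∞ → ℝ≥0∞) : Expct V := fun σ => f (σ τ)

theorem potential_update_self (τ : V) (f : ℝ≥0∞ → ℝ≥0∞) (σ : PState V) (v : ℝ≥0∞) :
    potential τ f (Function.update σ τ v) = f v := by
  rw [potential, Function.update_self]

theorem potential_update_of_ne {x τ : V} (hx : x ≠ τ) (f : ℝ≥0∞ → ℝ≥0∞) (σ : PState V)
    (v : ℝ≥0∞) : potential τ f (Function.update σ x v) = potential τ f σ := by
  rw [potential, potential, Function.update_of_ne hx.symm]

theorem wp_Taux_reward (τ : V) (f : ℝ≥0∞ → ℝ≥0∞) (e X : Expct V) (σ : PState V) :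
    wp (Taux τ f (.reward e)) X σ =
      (f (σ τ + e σ) - f (σ τ)) + X (Function.update σ τ (σ τ + e σ)) := by
  rw [Taux, wp_seq, wp_reward, Pi.add_apply, wp_assign]

theorem wp_Tfull (τ : V) (f : ℝ≥0∞ → ℝ≥0∞) (S : pGCL V) (X : Expct V) (σ : PState V) :
    wp (Tfull τ f S) X σ = (potential τ f + wp (Taux τ f S) X) (Function.update σ τ 0) := by
  rw [Tfull, wp_seq, wp_assign, wp_seq, wp_reward, Pi.add_apply, Pi.add_apply,
    potential_update_self]

variable {τ : V} {f g : ℝ≥0∞ → ℝ≥0∞}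

theorem potential_add_wp_Taux_reward_mono (hf : Monotone f) (e : Expct V) {X Y : Expct V}
    (hXY : potential τ f + X ≤ potential τ g + Y) :
    potential τ f + wp (Taux τ f (.reward e)) X ≤
      potential τ g + wp (Taux τ g (.reward e)) Y := by
  intro σ
  set σ' := Function.update σ τ (σ τ + e σ)
  have hσ' : f (σ τ + e σ) + X σ' ≤ g (σ τ + e σ) + Y σ' := by
    simpa only [Pi.add_apply, σ', potential_update_self] using hXY σ'
  rw [Pi.add_apply, Pi.add_apply, wp_Taux_reward, wp_Taux_reward]
  calc f (σ τ) + ((f (σ τ + e σ) - f (σ τ)) + X σ')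
      = f (σ τ + e σ) + X σ' := by
        rw [← add_assoc, add_tsub_cancel_of_le (hf le_self_add)]
    _ ≤ g (σ τ + e σ) + Y σ' := hσ'
    _ ≤ g (σ τ) + ((g (σ τ + e σ) - g (σ τ)) + Y σ') := by
        rw [← add_assoc]
        gcongr
        exact le_add_tsub

theorem potential_add_wp_Taux_mono (hf : Monotone f) (hfg : f ≤ g) {S : pGCL V}
    (hτ : NotAssigned τ S) {X Y : Expct V} (hXY : potential τ f + X ≤ potential τ g + Y) :
    potential τ f + wp (Taux τ f S) X ≤ potential τ g + wp (Taux τ g S) Y := by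
  induction S generalizing X Y with
  | skip => exact hXY
  | assign x e =>
    intro σ
    simpa only [Taux, Pi.add_apply, wp_assign, potential_update_of_ne hτ] using
      hXY (Function.update σ x (e σ))
  | reward e => exact potential_add_wp_Taux_reward_mono hf e hXY
  | seq S₁ S₂ ih₁ ih₂ => exact ih₁ hτ.1 (ih₂ hτ.2 hXY)
  | prob p hp S₁ S₂ ih₁ ih₂ =>
    intro σ
    simp only [Taux, Pi.add_apply, wp_prob, add_convexCombo (add_tsub_cancel_of_le hp)]
    exact add_le_add (mul_le_mul_right (ih₁ hτ.1 hXY σ) p)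
      (mul_le_mul_right (ih₂ hτ.2 hXY σ) (1 - p))
  | ifte b S₁ S₂ ih₁ ih₂ =>
    intro σ
    simp only [Taux, Pi.add_apply, wp_ifte]
    split
    · exact ih₁ hτ.1 hXY σ
    · exact ih₂ hτ.2 hXY σ
  | loop b S ih =>
    simp only [Taux, wp_loop]
    have hpot : potential τ f ≤ potential τ g := fun σ => hfg (σ τ)
    refine add_lfp_le_add_lfp hpot fun Z W hZW σ => ?_
    simp only [Pi.add_apply, loopHom_apply]
    split
    · exact ih hτ hZW σ
    · exact hXY σ

end RewardTransformation

theorem wp_Tfull_mono_general (S : pGCL V) {f g : ℝ≥0∞ → ℝ≥0∞} (hf : Monotone f) (hfg : f ≤ g)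
    {τ : V} (hτ : NotAssigned τ S) (X : Expct V) :
    wp (Tfull τ f S) X ≤ wp (Tfull τ g S) X := by
  intro σ
  rw [wp_Tfull, wp_Tfull]
  have hX : potential τ f + X ≤ potential τ g + X := fun σ => add_le_add_left (hfg (σ τ)) (X σ)
  exact potential_add_wp_Taux_mono hf hfg hτ hX (Function.update σ τ 0)

/-- Monotonicity of the reward program transformation:
for monotone `f ≤ g`, `wp[T_f(S)](X) ≤ wp[T_g(S)](X)` pointwise. -/
theorem wp_Tfull_mono (S : pGCL V) (f g : ℝ≥0∞ → ℝ≥0∞)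
    (hf : Monotone f) (hg : Monotone g) (hfg : ∀ x, f x ≤ g x)
    (τ : V) (hτ : NotOccurs τ S) (X : Expct V) :
    wp (Tfull τ f S) X ≤ wp (Tfull τ g S) X :=
  wp_Tfull_mono_general S hf hfg hτ.notAssigned X
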